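/- Let M be an alternal rational-function-valued mould in the variables v_i such that the mould M̌ defined by M̌(v_1,...,v_r) = v_1(v_1-v_2)⋯(v_{r-1}-v_r)v_r · M(v_1,...,v_r) is polynomial-valued in every depth. Then M̌(0, v_2, ..., v_r) = M̌(v_2, ..., v_r, 0) for every r ≥ 2. -/

import Mathlib

/-- A mould over ℚ: its depth-r component is its restriction to lists of length r
(a function of r commuting variables, identified with the corresponding ℚ-valued function). -/
abbrev Mould := List ℚ → ℚ

/-- The list of all shuffles of two lists. -/
def shuffles : List ℚ → List ℚ → List (List ℚ)
  | [], ys => [ys]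
  | x :: xs, [] => [x :: xs]
  | x :: xs, y :: ys =>
      ((shuffles xs (y :: ys)).map (x :: ·)) ++ ((shuffles (x :: xs) ys).map (y :: ·))

/-- Δ_v(v₁,…,v_r) = v₁(v₁-v₂)(v₂-v₃)⋯(v_{r-1}-v_r)v_r (equal to 1 in depth 0). -/
def deltaV (w : List ℚ) : ℚ :=
  w.headD 1 * w.getLastD 1 * (List.zipWith (fun a b => a - b) w w.tail).prod

/-- A generic point: pairwise distinct, nonzero coordinates (so that Δ_v is nonzero at the
point and at all its permutations); identities of rational functions are equivalent to their
pointwise validity at such points. -/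
def GoodV (w : List ℚ) : Prop := w.Nodup ∧ (0 : ℚ) ∉ w

/-- Evaluation of a family of polynomials (one in each depth) at a point, in the matching
depth: this encodes a polynomial-valued mould. -/
noncomputable def evalP (p : (r : ℕ) → MvPolynomial (Fin r) ℚ) (w : List ℚ) : ℚ :=
  MvPolynomial.aeval w.get (p w.length)

open Filter Topology

/-- A one-parameter family of lists of constant length, all of whose entries vary continuously. -/
def IsContinuousFamily (L : ℚ → List ℚ) : Prop :=
  ∃ n, (∀ t, (L t).length = n) ∧ ∀ i, Continuous fun t => (L t).getD i 0

lemma IsContinuousFamily.const (l : List ℚ) : IsContinuousFamily fun _ => l :=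
  ⟨l.length, fun _ => rfl, fun _ => continuous_const⟩

lemma IsContinuousFamily.append {L K : ℚ → List ℚ} (hL : IsContinuousFamily L)
    (hK : IsContinuousFamily K) : IsContinuousFamily fun t => L t ++ K t := by
  obtain ⟨n, hn, hL⟩ := hL
  obtain ⟨m, hm, hK⟩ := hK
  refine ⟨n + m, fun t => by simp [hn, hm], fun i => ?_⟩
  rcases lt_or_ge i n with h | h
  · refine (hL i).congr fun t => ?_
    rw [List.getD_append _ _ _ _ (by rw [hn]; exact h)]
  · refine (hK (i - n)).congr fun t => ?_
    rw [List.getD_append_right _ _ _ _ (by rw [hn]; exact h), hn]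

lemma IsContinuousFamily.cons {f : ℚ → ℚ} {L : ℚ → List ℚ} (hf : Continuous f)
    (hL : IsContinuousFamily L) : IsContinuousFamily fun t => f t :: L t := by
  obtain ⟨n, hn, hL⟩ := hL
  refine ⟨n + 1, fun t => by simp [hn], fun i => ?_⟩
  cases i with
  | zero => simpa using hf
  | succ i => simpa using hL i

lemma IsContinuousFamily.ofFn {n : ℕ} {f : ℚ → Fin n → ℚ} (hf : ∀ i, Continuous fun t => f t i) :
    IsContinuousFamily fun t => List.ofFn (f t) := by
  refine ⟨n, fun t => by simp, fun i => ?_⟩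
  by_cases h : i < n
  · simpa [List.getD_eq_getElem?_getD, h] using hf ⟨i, h⟩
  · simpa [List.getD_eq_getElem?_getD, h] using continuous_const

lemma evalP_eq_eval_getD (p : (r : ℕ) → MvPolynomial (Fin r) ℚ) {w : List ℚ} {n : ℕ}
    (h : w.length = n) :
    evalP p w = MvPolynomial.eval (fun i : Fin n => w.getD i 0) (p n) := by
  subst h
  rw [evalP, MvPolynomial.aeval_eq_eval]
  congr 2
  funext i
  simp

lemma IsContinuousFamily.continuous_evalP {L : ℚ → List ℚ} (hL : IsContinuousFamily L)
    (p : (r : ℕ) → MvPolynomial (Fin r) ℚ) : Continuous fun t => evalP p (L t) := by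
  obtain ⟨n, hn, hL⟩ := hL
  simp_rw [fun t => evalP_eq_eval_getD p (hn t)]
  exact (MvPolynomial.continuous_eval (p n)).comp (continuous_pi fun i => hL i)

lemma deltaV_cons_cons (x y : ℚ) (b : List ℚ) :
    deltaV (x :: y :: b) * y = x * (x - y) * deltaV (y :: b) := by
  simp only [deltaV, List.headD_cons, List.tail_cons, List.zipWith_cons_cons, List.prod_cons,
    List.getLastD_cons]
  ring

lemma prod_sub_append (a b : List ℚ) (u : ℚ) :
    (List.zipWith (fun a b => a - b) (a ++ u :: b) (a ++ u :: b).tail).prod =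
      (List.zipWith (fun a b => a - b) (a ++ [u]) (a ++ [u]).tail).prod *
        (List.zipWith (fun a b => a - b) (u :: b) (u :: b).tail).prod := by
  induction a with
  | nil => simp
  | cons c a ih =>
    cases a with
    | nil => simp
    | cons d a =>
      simp only [List.cons_append, List.tail_cons, List.zipWith_cons_cons, List.prod_cons] at ih ⊢
      rw [ih]
      ring

lemma deltaV_append_cons (a b : List ℚ) (u : ℚ) :
    deltaV (a ++ u :: b) * u ^ 2 = deltaV (a ++ [u]) * deltaV (u :: b) := by
  have hlast : (a ++ u :: b).getLastD 1 = (u :: b).getLastD 1 := by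
    simp only [List.getLastD_eq_getLast?, List.getLast?_append]
    simp [List.getLast?_cons]
  have hhead : (a ++ u :: b).headD 1 = (a ++ [u]).headD 1 := by
    cases a <;> simp
  have hl : (a ++ [u]).getLastD 1 = u := by simp [List.getLastD_eq_getLast?]
  simp only [deltaV]
  rw [prod_sub_append a b u, hlast, hhead, hl, List.headD_cons]
  ring

lemma deltaV_ne_zero {w : List ℚ} (hw : GoodV w) : deltaV w ≠ 0 := by
  induction w with
  | nil => simp [deltaV]
  | cons x b ih =>
    obtain ⟨h1, h2⟩ := hw
    cases b with
    | nil =>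
      have : x ≠ 0 := by simpa [eq_comm] using h2
      simp [deltaV, this]
    | cons y b =>
      have hb : deltaV (y :: b) ≠ 0 :=
        ih ⟨h1.of_cons, fun h => h2 (List.mem_cons_of_mem _ h)⟩
      have hx : x ≠ 0 := fun h => h2 (by simp [h])
      have hxy : x - y ≠ 0 := by
        intro h
        exact (List.nodup_cons.1 h1).1 (by simp [sub_eq_zero.1 h])
      intro h
      have := deltaV_cons_cons x y b
      rw [h, zero_mul] at this
      exact mul_ne_zero (mul_ne_zero hx hxy) hb this.symm

lemma eventually_ne_nhdsNE_zero (c : ℚ) : ∀ᶠ x in 𝓝[≠] (0 : ℚ), x ≠ c :=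
  nhdsNE_le_cofinite 0 (Set.finite_singleton c).compl_mem_cofinite

lemma eventually_goodV_cons {w : List ℚ} (hw : GoodV w) :
    ∀ᶠ x in 𝓝[≠] (0 : ℚ), GoodV (x :: w) := by
  have h : ∀ᶠ x in 𝓝[≠] (0 : ℚ), x ∉ w :=
    nhdsNE_le_cofinite 0 (List.finite_toSet w).compl_mem_cofinite
  filter_upwards [h, eventually_ne_nhdsNE_zero 0] with x hx hx0
  exact ⟨List.nodup_cons.2 ⟨hx, hw.1⟩, by simp [hw.2, hx0.symm]⟩

lemma GoodV.perm {v w : List ℚ} (hv : GoodV v) (h : v.Perm w) : GoodV w :=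
  ⟨h.nodup_iff.1 hv.1, fun h' => hv.2 (h.mem_iff.2 h')⟩

/-- If `Δ_v` at `x` inserted in a good word is `d x`, then `x` times the mould has the limit
predicted by the polynomial values. -/
lemma tendsto_mul_mould {M : Mould} {p : (r : ℕ) → MvPolynomial (Fin r) ℚ}
    (hrat : ∀ w : List ℚ, GoodV w → deltaV w * M w = evalP p w) {a b : List ℚ}
    (hw : GoodV (a ++ b)) {q : ℚ → ℚ} (hq : ContinuousAt q 0)
    (hΔ : ∀ x, deltaV (a ++ x :: b) ≠ 0 → x = q x * deltaV (a ++ x :: b)) :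
    Tendsto (fun x => x * M (a ++ x :: b)) (𝓝[≠] 0) (𝓝 (q 0 * evalP p (a ++ 0 :: b))) := by
  have hc : ContinuousAt (fun x => q x * evalP p (a ++ x :: b)) 0 :=
    hq.mul (((IsContinuousFamily.const a).append
      (.cons continuous_id (.const b))).continuous_evalP p).continuousAt
  refine (hc.tendsto.mono_left nhdsWithin_le_nhds).congr' ?_
  filter_upwards [eventually_goodV_cons hw] with x hx
  have hx' : GoodV (a ++ x :: b) := hx.perm List.perm_middle.symm
  rw [← hrat _ hx', ← mul_assoc, ← hΔ x (deltaV_ne_zero hx')]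

lemma tendsto_mul_mould_first {M : Mould} {p : (r : ℕ) → MvPolynomial (Fin r) ℚ}
    (hrat : ∀ w : List ℚ, GoodV w → deltaV w * M w = evalP p w) {y : ℚ} {b : List ℚ}
    (hw : GoodV (y :: b)) :
    Tendsto (fun x => x * M (x :: y :: b)) (𝓝[≠] 0)
      (𝓝 (-(evalP p (0 :: y :: b) / deltaV (y :: b)))) := by
  have hy : y ≠ 0 := fun h => hw.2 (by simp [h])
  have hd := deltaV_ne_zero hw
  have h := tendsto_mul_mould (a := []) (b := y :: b) hrat hw
    (q := fun x => y / ((x - y) * deltaV (y :: b)))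
    (continuousAt_const.div (by fun_prop) (by simp [hy, hd])) (fun x hx => by
      have e := deltaV_cons_cons x y b
      simp only [List.nil_append] at hx ⊢
      have hxy : x - y ≠ 0 := by
        intro h0
        rw [h0] at e
        simp [hx, hy] at e
      field_simp
      linear_combination -e)
  simp only [List.nil_append, zero_sub] at h
  convert h using 2
  field_simp

lemma tendsto_mul_mould_last {M : Mould} {p : (r : ℕ) → MvPolynomial (Fin r) ℚ}
    (hrat : ∀ w : List ℚ, GoodV w → deltaV w * M w = evalP p w) {u : ℚ} {a : List ℚ}
    (hw : GoodV (a ++ [u])) :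
    Tendsto (fun x => x * M (a ++ [u] ++ [x])) (𝓝[≠] 0)
      (𝓝 (evalP p (a ++ [u] ++ [0]) / deltaV (a ++ [u]))) := by
  have hu : u ≠ 0 := fun h => hw.2 (by simp [h])
  have hd := deltaV_ne_zero hw
  have h := tendsto_mul_mould (a := a ++ [u]) (b := []) hrat (by simpa using hw)
    (q := fun x => u / ((u - x) * deltaV (a ++ [u])))
    (continuousAt_const.div (by fun_prop) (by simp [hu, hd])) (fun x hx => by
      have e := deltaV_append_cons a [x] u
      have e' : deltaV [u, x] = u * x * (u - x) := by simp [deltaV]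
      rw [e'] at e
      simp only [List.append_assoc, List.cons_append, List.nil_append] at hx ⊢
      have hxy : u - x ≠ 0 := by
        intro h0
        rw [h0] at e
        simp [hx, hu] at e
      field_simp
      apply mul_left_cancel₀ hu
      linear_combination -e)
  convert h using 2
  field_simp
  ring

lemma tendsto_mul_mould_middle {M : Mould} {p : (r : ℕ) → MvPolynomial (Fin r) ℚ}
    (hrat : ∀ w : List ℚ, GoodV w → deltaV w * M w = evalP p w) {u y : ℚ} {a b : List ℚ}
    (hw : GoodV (a ++ [u] ++ y :: b)) :
    Tendsto (fun x => x * M (a ++ [u] ++ x :: y :: b)) (𝓝[≠] 0) (𝓝 0) := by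
  have hu : u ≠ 0 := fun h => hw.2 (by simp [h])
  have hy : y ≠ 0 := fun h => hw.2 (by simp [h])
  have hd := deltaV_ne_zero hw
  have h := tendsto_mul_mould (a := a ++ [u]) (b := y :: b) hrat hw
    (q := fun x => x * (u - y) / ((u - x) * (x - y) * deltaV (a ++ [u] ++ y :: b)))
    ((by fun_prop : ContinuousAt (fun x : ℚ => x * (u - y)) 0).div
      (by fun_prop) (by
        rw [sub_zero, zero_sub]
        exact mul_ne_zero (mul_ne_zero hu (neg_ne_zero.2 hy)) hd)) (fun x hx => by
      have e₁ := deltaV_append_cons a (x :: y :: b) u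
      have e₂ := deltaV_append_cons a (y :: b) u
      have e₃ : deltaV (u :: x :: y :: b) * (u - y) =
          (u - x) * (x - y) * deltaV (u :: y :: b) := by
        simp only [deltaV, List.headD_cons, List.tail_cons, List.zipWith_cons_cons,
          List.prod_cons, List.getLastD_cons]
        ring
      simp only [List.append_assoc, List.cons_append, List.nil_append] at hx hd hw ⊢
      have e : deltaV (a ++ u :: x :: y :: b) * (u - y) =
          (u - x) * (x - y) * deltaV (a ++ u :: y :: b) := by
        apply mul_left_cancel₀ (pow_ne_zero 2 hu)
        linear_combination (u - y) * e₁ + deltaV (a ++ [u]) * e₃ - (u - x) * (x - y) * e₂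
      have huy : u - y ≠ 0 := by
        intro h0
        have := hw.1.sublist (List.sublist_append_right a _)
        exact (List.nodup_cons.1 this).1 (by simp [sub_eq_zero.1 h0])
      have hne : (u - x) * (x - y) * deltaV (a ++ u :: y :: b) ≠ 0 :=
        e ▸ mul_ne_zero hx huy
      rw [div_mul_eq_mul_div, eq_div_iff hne]
      linear_combination -x * e)
  simpa using h

lemma tendsto_mul_sum_shuffles {M : Mould} {p : (r : ℕ) → MvPolynomial (Fin r) ℚ}
    (hrat : ∀ w : List ℚ, GoodV w → deltaV w * M w = evalP p w) (b a : List ℚ) (u : ℚ)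
    (hw : GoodV (a ++ [u] ++ b)) :
    Tendsto (fun x => x * ((shuffles [x] b).map fun s => M (a ++ [u] ++ s)).sum) (𝓝[≠] 0)
      (𝓝 (evalP p (a ++ [u] ++ b ++ [0]) / deltaV (a ++ [u] ++ b))) := by
  induction b generalizing a u with
  | nil =>
    rw [List.append_nil] at hw ⊢
    simpa [shuffles] using tendsto_mul_mould_last hrat hw
  | cons y b ih =>
    have h := (tendsto_mul_mould_middle hrat hw).add (ih (a ++ [u]) y (by simpa using hw))
    simpa [shuffles, mul_add, Function.comp_def] using h

lemma evalP_zero_cons_of_goodV {M : Mould} {p : (r : ℕ) → MvPolynomial (Fin r) ℚ}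
    (hrat : ∀ w : List ℚ, GoodV w → deltaV w * M w = evalP p w)
    (hal : ∀ w₁ w₂ : List ℚ, w₁ ≠ [] → w₂ ≠ [] → GoodV (w₁ ++ w₂) →
      ((shuffles w₁ w₂).map M).sum = 0)
    {w : List ℚ} (hw : w ≠ []) (hg : GoodV w) :
    evalP p (0 :: w) = evalP p (w ++ [0]) := by
  cases w with
  | nil => exact absurd rfl hw
  | cons y b =>
    have h := (tendsto_mul_mould_first hrat hg).add (tendsto_mul_sum_shuffles hrat b [] y hg)
    have h' : Tendsto (fun _ : ℚ => (0 : ℚ)) (𝓝[≠] 0) (𝓝 0) := tendsto_const_nhds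
    have e := tendsto_nhds_unique (h'.congr' ?_) h
    · have hd := deltaV_ne_zero hg
      simp only [List.nil_append, List.cons_append] at e ⊢
      field_simp at e
      linear_combination e
    · filter_upwards [eventually_goodV_cons hg] with x hx
      have := hal [x] (y :: b) (by simp) (by simp) hx
      simp only [shuffles, List.map_append, List.map_map, List.map_cons, List.map_nil,
        List.sum_append, List.sum_cons, List.sum_nil, Function.comp_def, add_zero] at this
      simp only [List.nil_append, List.cons_append]
      rw [← mul_add, this, mul_zero]

lemma eventually_add_mul_ne_zero (c : ℚ) {d : ℚ} (hd : d ≠ 0) :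
    ∀ᶠ t in 𝓝[≠] (0 : ℚ), c + t * d ≠ 0 := by
  filter_upwards [eventually_ne_nhdsNE_zero (-c / d)] with t ht h
  exact ht ((eq_div_iff hd).2 (by linear_combination h))

lemma eventually_goodV_ofFn {n : ℕ} (f : Fin n → ℚ) :
    ∀ᶠ t in 𝓝[≠] (0 : ℚ), GoodV (List.ofFn fun i => f i + t * ((i : ℚ) + 1)) := by
  have h₁ : ∀ᶠ t in 𝓝[≠] (0 : ℚ), ∀ i : Fin n, f i + t * ((i : ℚ) + 1) ≠ 0 :=
    eventually_all.2 fun i => eventually_add_mul_ne_zero _ (by positivity)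
  have h₂ : ∀ᶠ t in 𝓝[≠] (0 : ℚ), ∀ i j : Fin n, i ≠ j →
      (f i - f j) + t * ((i : ℚ) - j) ≠ 0 := by
    refine eventually_all.2 fun i => eventually_all.2 fun j => ?_
    by_cases hij : i = j
    · simp [hij]
    · have hd : (i : ℚ) - j ≠ 0 := by
        rw [sub_ne_zero]
        exact_mod_cast fun h => hij (Fin.ext h)
      exact (eventually_add_mul_ne_zero _ hd).mono fun t ht _ => ht
  filter_upwards [h₁, h₂] with t ht₁ ht₂
  refine ⟨List.nodup_ofFn.2 fun i j hij => ?_, ?_⟩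
  · by_contra hne
    exact ht₂ i j hne (by linear_combination hij)
  · rw [List.mem_ofFn]
    rintro ⟨i, hi⟩
    exact ht₁ i hi

/-- Let M be an alternal rational-function-valued mould such that M̌ = Δ_v·M is
polynomial-valued (with polynomial family p) in every depth.  Then
M̌(0, v₂, …, v_r) = M̌(v₂, …, v_r, 0) for every r ≥ 2. -/
theorem check_mould_boundary_symmetry (M : Mould) (p : (r : ℕ) → MvPolynomial (Fin r) ℚ)
    (h0 : M [] = 0)
    (hrat : ∀ w : List ℚ, GoodV w → deltaV w * M w = evalP p w)
    (hal : ∀ w₁ w₂ : List ℚ, w₁ ≠ [] → w₂ ≠ [] → GoodV (w₁ ++ w₂) →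
      ((shuffles w₁ w₂).map M).sum = 0)
    (w : List ℚ) (hw : w ≠ []) :
    evalP p (0 :: w) = evalP p (w ++ [0]) := by
  set L : ℚ → List ℚ := fun t => List.ofFn fun i : Fin w.length => w.get i + t * ((i : ℚ) + 1)
    with hL
  have hLc : IsContinuousFamily L := .ofFn fun i => by fun_prop
  have hL0 : L 0 = w := by simp [hL]
  have hne : ∀ t, L t ≠ [] := fun t h => hw <| List.length_eq_zero_iff.1 <| by
    simpa [hL] using congrArg List.length h
  have h₁ := ((IsContinuousFamily.cons (f := fun _ => 0) continuous_const hLc).continuous_evalP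
    p).tendsto 0
  have h₂ := ((hLc.append (.const [0])).continuous_evalP p).tendsto 0
  simp only [hL0] at h₁ h₂
  refine tendsto_nhds_unique (h₁.mono_left nhdsWithin_le_nhds)
    ((h₂.mono_left nhdsWithin_le_nhds).congr' (f₁ := _) (l₁ := 𝓝[≠] 0) ?_)
  filter_upwards [eventually_goodV_ofFn w.get] with t ht
  exact (evalP_zero_cons_of_goodV hrat hal (hne t) ht).symm
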